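/- arXiv:1312.1587 — 2 statements merged into one kernel-verified Lean document; each statement's English description precedes it below -/
import Mathlib

section
/- Let M be an invertible symmetric n×n real matrix, V : ℝⁿ → ℝ differentiable with gradient V_q, μ : ℝⁿ → ℝ^{m×n}, Y : ℝⁿ → ℝⁿ a vector field, Π(q) = M·Y(q), and h > 0. Define the discrete Lagrangian L_d(x, y) = (h/2) L(x, (y−x)/h) + (h/2) L(y, (y−x)/h), where L(q, q̇) = (1/2) q̇ᵀ M q̇ − V(q). Then for q_{k−1}, q_k, q_{k+1} ∈ ℝⁿ and λ ∈ ℝᵐ, the affine GNI equations D₁L_d(q_k, q_{k+1}) + D₂L_d(q_{k−1}, q_k) = μ(q_k)ᵀ λ and μ(q_k) M⁻¹ ( D₁L_d(q_k, q_{k+1}) − D₂L_d(q_{k−1}, q_k) + 2 Π(q_k) ) = 0 hold if and only if, with λ̃ = λ/h, the affine nonholonomic SHAKE scheme holds: q_{k+1} − 2q_k + q_{k−1} = −h² M⁻¹ ( V_q(q_k) + μ(q_k)ᵀ λ̃ ) and μ(q_k) ( (q_{k+1} − q_{k−1})/(2h) − Y(q_k) ) = 0. -/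
/-!
The discrete Lagrangian `L_d(x, y) = (1/(2h)) (y - x)ᵀ M (y - x) - (h/2) (V x + V y)` is symmetric
in its two arguments, so the single gradient formula
`D₁L_d(x, y) = -(1/h) M (y - x) - (h/2) V_q(x)` yields both `D₁L_d(q₁, q₂)` and `D₂L_d(q₀, q₁)`.
Their sum is `-(1/h) M (q₂ - 2 q₁ + q₀) - h V_q(q₁)` and their difference is `-(1/h) M (q₂ - q₀)`;
applying `M⁻¹` turns the first GNI equation into the SHAKE update and the second one into `-2` times
the SHAKE constraint. The gradients only enter through derivatives along lines.
-/

open Matrix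

/-- The continuous linear functional on `ℝⁿ` given by dot product with `w`;
used to express gradients of scalar functions. -/
noncomputable def vecCLM {n : ℕ} (w : Fin n → ℝ) : (Fin n → ℝ) →L[ℝ] ℝ :=
  ∑ i, w i • ContinuousLinearMap.proj (R := ℝ) (φ := fun _ : Fin n => ℝ) i

theorem vecCLM_apply {n : ℕ} (w v : Fin n → ℝ) : vecCLM w v = w ⬝ᵥ v := by
  simp [vecCLM, dotProduct]

section GateauxGradient

variable {𝕜 ι : Type*} [NontriviallyNormedField 𝕜] [Fintype ι]

/-- `g` is the Gateaux gradient of `f` at `x`: every directional derivative of `f` at `x` exists and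
is the dot product with `g`. Only derivatives along lines are involved, so `ι → 𝕜` needs no norm. -/
def HasGateauxGradientAt (f : (ι → 𝕜) → 𝕜) (g x : ι → 𝕜) : Prop :=
  ∀ v, HasLineDerivAt 𝕜 f (g ⬝ᵥ v) x v

namespace HasGateauxGradientAt

variable {f f₁ f₂ : (ι → 𝕜) → 𝕜} {g g₁ g₂ x : ι → 𝕜}

theorem of_hasFDerivAt {n : ℕ} {f : (Fin n → ℝ) → ℝ} {g x : Fin n → ℝ}
    (hf : HasFDerivAt f (vecCLM g) x) : HasGateauxGradientAt f g x := fun v => by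
  simpa only [vecCLM_apply] using hf.hasLineDerivAt v

theorem unique (h₁ : HasGateauxGradientAt f g₁ x) (h₂ : HasGateauxGradientAt f g₂ x) : g₁ = g₂ :=
  dotProduct_eq _ _ fun v => (h₁ v).unique (h₂ v)

theorem sub (h₁ : HasGateauxGradientAt f₁ g₁ x) (h₂ : HasGateauxGradientAt f₂ g₂ x) :
    HasGateauxGradientAt (fun x => f₁ x - f₂ x) (g₁ - g₂) x := fun v => by
  rw [sub_dotProduct]
  exact HasDerivAt.fun_sub (h₁ v) (h₂ v)

theorem add_const (hf : HasGateauxGradientAt f g x) (c : 𝕜) :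
    HasGateauxGradientAt (fun x => f x + c) g x := fun v =>
  HasDerivAt.add_const c (hf v)

theorem const_mul (hf : HasGateauxGradientAt f g x) (c : 𝕜) :
    HasGateauxGradientAt (fun x => c * f x) (c • g) x := fun v => by
  rw [smul_dotProduct]
  exact HasDerivAt.const_mul c (hf v)

theorem comp_const_sub {y : ι → 𝕜} (hf : HasGateauxGradientAt f g (y - x)) :
    HasGateauxGradientAt (fun x => f (y - x)) (-g) x := fun v => by
  have hline : (fun t : 𝕜 => f (y - (x + t • v))) = fun t => f (y - x + t • -v) := by
    funext t
    rw [smul_neg, ← sub_eq_add_neg, sub_sub]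
  rw [HasLineDerivAt, hline, neg_dotProduct, ← dotProduct_neg]
  exact hf (-v)

theorem dotProduct_mulVec_self (M : Matrix ι ι 𝕜) (x : ι → 𝕜) :
    HasGateauxGradientAt (fun x => x ⬝ᵥ M *ᵥ x) ((M + Mᵀ) *ᵥ x) x := fun v => by
  have hlinear : ((M + Mᵀ) *ᵥ x) ⬝ᵥ v = x ⬝ᵥ M *ᵥ v + v ⬝ᵥ M *ᵥ x := by
    rw [add_mulVec, add_dotProduct, mulVec_transpose, ← dotProduct_mulVec, dotProduct_comm _ v,
      add_comm]
  have hexpand : (fun t : 𝕜 => (x + t • v) ⬝ᵥ M *ᵥ (x + t • v)) = fun t =>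
      x ⬝ᵥ M *ᵥ x + t * (x ⬝ᵥ M *ᵥ v + v ⬝ᵥ M *ᵥ x) + t ^ 2 * (v ⬝ᵥ M *ᵥ v) := by
    funext t
    simp only [mulVec_add, mulVec_smul, dotProduct_add, add_dotProduct, dotProduct_smul,
      smul_dotProduct, smul_eq_mul]
    ring
  rw [HasLineDerivAt, hexpand, hlinear]
  have ht : HasDerivAt (fun t : 𝕜 => t) 1 0 := hasDerivAt_id 0
  simpa using ((ht.mul_const (x ⬝ᵥ M *ᵥ v + v ⬝ᵥ M *ᵥ x)).const_add (x ⬝ᵥ M *ᵥ x)).fun_add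
    ((ht.fun_pow 2).mul_const (v ⬝ᵥ M *ᵥ v))

end HasGateauxGradientAt

end GateauxGradient

section DiscreteLagrangian

variable {K ι : Type*} [Field K] [Fintype ι]

/-- The Lagrangian `L(q, q̇) = (1/2) q̇ᵀ M q̇ - V(q)` of a mechanical system. -/
def mechanicalLagrangian (M : Matrix ι ι K) (V : (ι → K) → K) (q v : ι → K) : K :=
  (1 / 2) * (v ⬝ᵥ M *ᵥ v) - V q

/-- The trapezoidal discretization of the action of `L` over one step of length `h` from `x` to `y`,
with the velocity frozen at the difference quotient `(y - x)/h`. -/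
def discreteLagrangian (h : K) (L : (ι → K) → (ι → K) → K) (x y : ι → K) : K :=
  (h / 2) * L x ((1 / h) • (y - x)) + (h / 2) * L y ((1 / h) • (y - x))

theorem discreteLagrangian_mechanicalLagrangian [NeZero (2 : K)] (M : Matrix ι ι K)
    (V : (ι → K) → K) {h : K} (hh : h ≠ 0) (x y : ι → K) :
    discreteLagrangian h (mechanicalLagrangian M V) x y =
      1 / (2 * h) * ((y - x) ⬝ᵥ M *ᵥ (y - x)) - h / 2 * (V x + V y) := by
  have h2 : (2 : K) ≠ 0 := two_ne_zero
  simp only [discreteLagrangian, mechanicalLagrangian, mulVec_smul, dotProduct_smul,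
    smul_dotProduct, smul_eq_mul]
  field_simp
  ring

theorem discreteLagrangian_mechanicalLagrangian_comm (M : Matrix ι ι K) (V : (ι → K) → K)
    (h : K) (x y : ι → K) :
    discreteLagrangian h (mechanicalLagrangian M V) x y =
      discreteLagrangian h (mechanicalLagrangian M V) y x := by
  simp only [discreteLagrangian, mechanicalLagrangian, ← neg_sub x y, smul_neg, mulVec_neg,
    neg_dotProduct_neg]
  exact add_comm _ _

end DiscreteLagrangian

section PartialGradients

variable {𝕜 ι : Type*} [NontriviallyNormedField 𝕜] [NeZero (2 : 𝕜)] [Fintype ι]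
  {M : Matrix ι ι 𝕜} {V : (ι → 𝕜) → 𝕜} {h : 𝕜}

theorem hasGateauxGradientAt_discreteLagrangian_left (hM : M.IsSymm) (hh : h ≠ 0)
    {g x : ι → 𝕜} (hV : HasGateauxGradientAt V g x) (y : ι → 𝕜) :
    HasGateauxGradientAt (fun x => discreteLagrangian h (mechanicalLagrangian M V) x y)
      (-(h⁻¹ • M *ᵥ (y - x)) - (h / 2) • g) x := by
  have h2 : (2 : 𝕜) ≠ 0 := two_ne_zero
  have hgrad : -(h⁻¹ • M *ᵥ (y - x)) = (1 / (2 * h)) • -((M + Mᵀ) *ᵥ (y - x)) := by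
    rw [hM.eq, add_mulVec]
    match_scalars
    field_simp
    ring
  simp only [discreteLagrangian_mechanicalLagrangian M V hh, hgrad]
  exact ((HasGateauxGradientAt.dotProduct_mulVec_self M (y - x)).comp_const_sub.const_mul _).sub
    ((hV.add_const (V y)).const_mul _)

theorem hasGateauxGradientAt_discreteLagrangian_right (hM : M.IsSymm) (hh : h ≠ 0)
    {g y : ι → 𝕜} (hV : HasGateauxGradientAt V g y) (x : ι → 𝕜) :
    HasGateauxGradientAt (discreteLagrangian h (mechanicalLagrangian M V) x)
      (h⁻¹ • M *ᵥ (y - x) - (h / 2) • g) y := by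
  have hcomm : discreteLagrangian h (mechanicalLagrangian M V) x =
      fun y => discreteLagrangian h (mechanicalLagrangian M V) y x :=
    funext (discreteLagrangian_mechanicalLagrangian_comm M V h x)
  rw [hcomm, ← neg_sub x y, mulVec_neg, smul_neg]
  exact hasGateauxGradientAt_discreteLagrangian_left hM hh hV x

end PartialGradients

section Inversion

variable {R ι : Type*} [CommRing R] [Fintype ι] [DecidableEq ι] {M : Matrix ι ι R}

theorem inv_mulVec_mulVec (hM : IsUnit M) (v : ι → R) : M⁻¹ *ᵥ (M *ᵥ v) = v := by
  rw [mulVec_mulVec, nonsing_inv_mul M ((isUnit_iff_isUnit_det M).mp hM), one_mulVec]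

theorem eq_inv_mulVec_iff (hM : IsUnit M) {a b : ι → R} : a = M⁻¹ *ᵥ b ↔ M *ᵥ a = b := by
  constructor
  · rintro rfl
    rw [mulVec_mulVec, mul_nonsing_inv M ((isUnit_iff_isUnit_det M).mp hM), one_mulVec]
  · rintro rfl
    exact (inv_mulVec_mulVec hM a).symm

end Inversion

theorem neg_inv_smul_sub_smul_eq_iff {K E : Type*} [Field K] [AddCommGroup E] [Module K E] {h : K}
    (hh : h ≠ 0) {p g c : E} :
    -(h⁻¹ • p) - h • g = c ↔ p = -(h ^ 2) • (g + h⁻¹ • c) := by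
  constructor
  · rintro rfl
    match_scalars <;> field_simp
    ring
  · rintro rfl
    match_scalars <;> field_simp
    ring

theorem gni_affine_shake_scheme_general {𝕜 ι κ : Type*} [NontriviallyNormedField 𝕜]
    [NeZero (2 : 𝕜)] [Fintype ι] [DecidableEq ι] [Fintype κ] {M : Matrix ι ι 𝕜} (hM : IsUnit M)
    (hMsymm : M.IsSymm) {V : (ι → 𝕜) → 𝕜} {h : 𝕜} (hh : h ≠ 0) {q0 q1 q2 g D1 D2 : ι → 𝕜}
    (hV : HasGateauxGradientAt V g q1)
    (hD1 : HasGateauxGradientAt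
      (fun x => discreteLagrangian h (mechanicalLagrangian M V) x q2) D1 q1)
    (hD2 : HasGateauxGradientAt (discreteLagrangian h (mechanicalLagrangian M V) q0) D2 q1)
    (μ : Matrix κ ι 𝕜) (Y : ι → 𝕜) (lam : κ → 𝕜) :
    (D1 + D2 = μᵀ *ᵥ lam ∧ μ *ᵥ (M⁻¹ *ᵥ (D1 - D2 + (2 : 𝕜) • (M *ᵥ Y))) = 0) ↔
      (q2 - (2 : 𝕜) • q1 + q0 = -(h ^ 2) • (M⁻¹ *ᵥ (g + μᵀ *ᵥ (h⁻¹ • lam))) ∧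
        μ *ᵥ ((1 / (2 * h)) • (q2 - q0) - Y) = 0) := by
  have h2 : (2 : 𝕜) ≠ 0 := two_ne_zero
  have hD1_eq := hD1.unique (hasGateauxGradientAt_discreteLagrangian_left hMsymm hh hV q2)
  have hD2_eq := hD2.unique (hasGateauxGradientAt_discreteLagrangian_right hMsymm hh hV q0)
  have hsum : D1 + D2 = -(h⁻¹ • M *ᵥ (q2 - (2 : 𝕜) • q1 + q0)) - h • g := by
    rw [hD1_eq, hD2_eq]
    simp only [mulVec_add, mulVec_sub, mulVec_smul]
    match_scalars <;> field_simp <;> ring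
  have hdiff : D1 - D2 + (2 : 𝕜) • (M *ᵥ Y) =
      M *ᵥ ((-2 : 𝕜) • ((1 / (2 * h)) • (q2 - q0) - Y)) := by
    rw [hD1_eq, hD2_eq]
    simp only [mulVec_sub, mulVec_smul]
    match_scalars <;> field_simp <;> ring
  refine and_congr ?_ ?_
  · rw [hsum, mulVec_smul μᵀ, neg_inv_smul_sub_smul_eq_iff hh, ← mulVec_smul M⁻¹,
      eq_inv_mulVec_iff hM]
  · rw [hdiff, inv_mulVec_mulVec hM, mulVec_smul, smul_eq_zero_iff_right (neg_ne_zero.mpr h2)]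

/-- For the mechanical Lagrangian `L(q,q̇) = (1/2)q̇ᵀMq̇ − V(q)` and
the discrete Lagrangian `L_d(x,y) = (h/2)L(x,(y−x)/h) + (h/2)L(y,(y−x)/h)`, the
affine GNI equations
`D₁L_d(q_k,q_{k+1}) + D₂L_d(q_{k−1},q_k) = μ(q_k)ᵀλ` and
`μ(q_k) M⁻¹ (D₁L_d(q_k,q_{k+1}) − D₂L_d(q_{k−1},q_k) + 2Π(q_k)) = 0`,
with `Π(q) = M·Y(q)`, hold iff, with `λ̃ = λ/h`, the affine nonholonomic SHAKE
scheme holds: `q_{k+1} − 2q_k + q_{k−1} = −h² M⁻¹(V_q(q_k) + μ(q_k)ᵀλ̃)` and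
`μ(q_k)((q_{k+1} − q_{k−1})/(2h) − Y(q_k)) = 0`. -/
theorem gni_affine_shake_scheme {n m : ℕ}
    (M : Matrix (Fin n) (Fin n) ℝ) (hM : IsUnit M) (hMsymm : Mᵀ = M)
    (V : (Fin n → ℝ) → ℝ) (Vq : (Fin n → ℝ) → Fin n → ℝ)
    (hV : ∀ x, HasFDerivAt V (vecCLM (Vq x)) x)
    (μ : (Fin n → ℝ) → Matrix (Fin m) (Fin n) ℝ)
    (Y : (Fin n → ℝ) → Fin n → ℝ)
    (h : ℝ) (hh : 0 < h)
    (L : (Fin n → ℝ) → (Fin n → ℝ) → ℝ)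
    (hL : ∀ x v, L x v = (1 / 2) * (v ⬝ᵥ M *ᵥ v) - V x)
    (Ld : (Fin n → ℝ) → (Fin n → ℝ) → ℝ)
    (hLd : ∀ x y, Ld x y =
      (h / 2) * L x ((1 / h) • (y - x)) + (h / 2) * L y ((1 / h) • (y - x)))
    (q0 q1 q2 : Fin n → ℝ) (lam : Fin m → ℝ)
    (D1 D2 : Fin n → ℝ)
    (hD1 : HasFDerivAt (fun x => Ld x q2) (vecCLM D1) q1)
    (hD2 : HasFDerivAt (fun y => Ld q0 y) (vecCLM D2) q1) :
    (D1 + D2 = (μ q1)ᵀ *ᵥ lam ∧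
        μ q1 *ᵥ (M⁻¹ *ᵥ (D1 - D2 + (2 : ℝ) • (M *ᵥ Y q1))) = 0) ↔
      (q2 - (2 : ℝ) • q1 + q0 =
          -(h ^ 2) • (M⁻¹ *ᵥ (Vq q1 + (μ q1)ᵀ *ᵥ (h⁻¹ • lam))) ∧
        μ q1 *ᵥ ((1 / (2 * h)) • (q2 - q0) - Y q1) = 0) := by
  obtain rfl : L = mechanicalLagrangian M V := funext₂ hL
  obtain rfl : Ld = discreteLagrangian h (mechanicalLagrangian M V) := funext₂ hLd
  exact gni_affine_shake_scheme_general hM hMsymm hh.ne' (.of_hasFDerivAt (hV q1))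
    (.of_hasFDerivAt hD1) (.of_hasFDerivAt hD2) (μ q1) (Y q1) lam
end

section
/- Let ω, y ∈ ℝ³ with associated skew-symmetric 3×3 matrices ω̂ and ŷ under the hat map. Then (1 − ω̂/2) · ŷ · (1 + ω̂/2) = hat( y − (ω × y)/2 + ((ω·y)/4)·ω ), i.e. under the hat identification the inverse right trivialized tangent of the Cayley map d cay_ω⁻¹ is represented by the 3×3 matrix I₃ − ω̂/2 + (ω ωᵀ)/4, where ω·y denotes the Euclidean inner product and × the cross product on ℝ³. -/
/-!
For every scalar `t`, expanding `(1 - t ω̂) ŷ (1 + t ω̂)` gives `ŷ - t [ω̂, ŷ] - t² ω̂ ŷ ω̂`.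
The Jacobi identity turns `[ω̂, ŷ]` into the hat of `ω × y`, and the triple product expansion
`ω × (y × z) = (ω·z) y - (ω·y) z`, applied to `z = ω × v ⟂ ω`, gives `ω̂ ŷ ω̂ = -(ω·y) ω̂`.
The Cayley map corresponds to `t = 1/2`.
-/

open Matrix

/-- The hat map sending `ω ∈ ℝ³` to the associated skew-symmetric 3×3 matrix. -/
def hat (ω : Fin 3 → ℝ) : Matrix (Fin 3) (Fin 3) ℝ :=
  !![0, -ω 2, ω 1; ω 2, 0, -ω 0; -ω 1, ω 0, 0]

section CrossMatrix

variable {R : Type*} [CommRing R]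

/-- The hat map over a commutative ring: the matrix of `v ↦ ω × v` in the standard basis,
bundled as a linear map in `ω`. -/
def crossMatrix : (Fin 3 → R) →ₗ[R] Matrix (Fin 3) (Fin 3) R :=
  LinearMap.toMatrix'.toLinearMap ∘ₗ crossProduct

theorem crossMatrix_mulVec (ω v : Fin 3 → R) : crossMatrix ω *ᵥ v = ω ⨯₃ v :=
  LinearMap.toMatrix'_mulVec _ v

theorem crossMatrix_cross (ω y : Fin 3 → R) :
    crossMatrix (ω ⨯₃ y) = crossMatrix ω * crossMatrix y - crossMatrix y * crossMatrix ω := by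
  refine Matrix.ext_iff_mulVec.mpr fun v => ?_
  simp only [sub_mulVec, ← mulVec_mulVec, crossMatrix_mulVec, cross_cross]

theorem cross_cross_cross_self (ω y v : Fin 3 → R) :
    ω ⨯₃ (y ⨯₃ (ω ⨯₃ v)) = -((ω ⬝ᵥ y) • ω ⨯₃ v) := by
  rw [cross_cross_eq_smul_sub_smul', dot_self_cross, zero_smul, zero_sub, dotProduct_comm]

theorem crossMatrix_mul_mul_self (ω y : Fin 3 → R) :
    crossMatrix ω * crossMatrix y * crossMatrix ω = -((ω ⬝ᵥ y) • crossMatrix ω) := by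
  refine Matrix.ext_iff_mulVec.mpr fun v => ?_
  simp only [← mulVec_mulVec, neg_mulVec, smul_mulVec, crossMatrix_mulVec, cross_cross_cross_self]

theorem one_sub_smul_mul_crossMatrix_mul_one_add_smul (t : R) (ω y : Fin 3 → R) :
    (1 - t • crossMatrix ω) * crossMatrix y * (1 + t • crossMatrix ω) =
      crossMatrix (y - t • ω ⨯₃ y + (t ^ 2 * (ω ⬝ᵥ y)) • ω) := by
  calc (1 - t • crossMatrix ω) * crossMatrix y * (1 + t • crossMatrix ω)
      = crossMatrix y - t • (crossMatrix ω * crossMatrix y - crossMatrix y * crossMatrix ω)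
          - t ^ 2 • (crossMatrix ω * crossMatrix y * crossMatrix ω) := by
        simp only [sub_mul, mul_add, one_mul, mul_one, smul_mul_assoc, mul_smul_comm]
        module
    _ = crossMatrix y - t • crossMatrix (ω ⨯₃ y)
          + (t ^ 2 * (ω ⬝ᵥ y)) • crossMatrix ω := by
        rw [← crossMatrix_cross, crossMatrix_mul_mul_self, smul_neg, sub_neg_eq_add, smul_smul]
    _ = crossMatrix (y - t • ω ⨯₃ y + (t ^ 2 * (ω ⬝ᵥ y)) • ω) := by
        simp only [map_add, map_sub, map_smul]

theorem one_sub_smul_crossMatrix_add_smul_vecMulVec_mulVec (t : R) (ω y : Fin 3 → R) :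
    (1 - t • crossMatrix ω + t ^ 2 • vecMulVec ω ω) *ᵥ y =
      y - t • ω ⨯₃ y + (t ^ 2 * (ω ⬝ᵥ y)) • ω := by
  rw [add_mulVec, sub_mulVec, one_mulVec, smul_mulVec, smul_mulVec, crossMatrix_mulVec,
    vecMulVec_mulVec, op_smul_eq_smul, smul_smul]

theorem cayley_inv_dtau_hat_formula_general (t : R) (ω y : Fin 3 → R) :
    (1 - t • crossMatrix ω) * crossMatrix y * (1 + t • crossMatrix ω) =
        crossMatrix (y - t • ω ⨯₃ y + (t ^ 2 * (ω ⬝ᵥ y)) • ω) ∧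
      y - t • ω ⨯₃ y + (t ^ 2 * (ω ⬝ᵥ y)) • ω =
        (1 - t • crossMatrix ω + t ^ 2 • vecMulVec ω ω) *ᵥ y :=
  ⟨one_sub_smul_mul_crossMatrix_mul_one_add_smul t ω y,
    (one_sub_smul_crossMatrix_add_smul_vecMulVec_mulVec t ω y).symm⟩

end CrossMatrix

theorem hat_mulVec (ω v : Fin 3 → ℝ) : hat ω *ᵥ v = ω ⨯₃ v := by
  rw [cross_apply]
  ext i
  fin_cases i <;> simp [hat, mulVec, vecHead, vecTail] <;> ring

theorem hat_eq_crossMatrix (ω : Fin 3 → ℝ) : hat ω = crossMatrix ω :=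
  Matrix.ext_iff_mulVec.mpr fun v => by rw [hat_mulVec, crossMatrix_mulVec]

/-- For `ω, y ∈ ℝ³`,
`(1 − ω̂/2)·ŷ·(1 + ω̂/2) = hat(y − (ω × y)/2 + ((ω·y)/4)ω)`; i.e. under the hat
identification the inverse right trivialized tangent of the Cayley map
`d cay_ω⁻¹` is represented by the matrix `I₃ − ω̂/2 + ω ωᵀ/4`. -/
theorem cayley_inv_dtau_hat_formula (ω y : Fin 3 → ℝ) :
    (1 - (2⁻¹ : ℝ) • hat ω) * hat y * (1 + (2⁻¹ : ℝ) • hat ω) =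
        hat (y - (2⁻¹ : ℝ) • crossProduct ω y + ((ω ⬝ᵥ y) / 4) • ω) ∧
      y - (2⁻¹ : ℝ) • crossProduct ω y + ((ω ⬝ᵥ y) / 4) • ω =
        (1 - (2⁻¹ : ℝ) • hat ω + (4⁻¹ : ℝ) • vecMulVec ω ω) *ᵥ y := by
  have quarter : (2⁻¹ : ℝ) ^ 2 = 4⁻¹ := by norm_num
  simpa only [hat_eq_crossMatrix, quarter, div_eq_inv_mul] using
    cayley_inv_dtau_hat_formula_general 2⁻¹ ω y
end
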